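/- arXiv:2410.03467 — 2 statements merged into one kernel-verified Lean document; each statement's English description precedes it below -/
import Mathlib

section
/- Let n be a positive integer and let F be a field of characteristic p, where p is an odd rational prime with gcd(n,p) ≠ 1 (equivalently, p divides n). Then the F-vector space Der_F(F V_{8n}) of F-derivations of the group algebra F V_{8n} has dimension 4(2n−1) over F if n is odd, and dimension 8(n−1) over F if n is even. -/
/-- The relators of the presentation
`V_{8n} = ⟨a, b ∣ a^{2n} = b⁴ = 1, (ba)² = 1, (b⁻¹a)² = 1⟩`,
where `a` is the generator indexed by `0` and `b` the one indexed by `1`.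
(The relations `ba = a⁻¹b⁻¹` and `b⁻¹a = a⁻¹b` are equivalent to
`(ba)² = 1` and `(b⁻¹a)² = 1` respectively.) -/
def V8nRels (n : ℕ) : Set (FreeGroup (Fin 2)) :=
  {(FreeGroup.of 0) ^ (2 * n), (FreeGroup.of 1) ^ 4,
   (FreeGroup.of 1 * FreeGroup.of 0) ^ 2,
   ((FreeGroup.of 1)⁻¹ * FreeGroup.of 0) ^ 2}

/-- The group `V_{8n}` of order `8n`. -/
abbrev V8n (n : ℕ) : Type := PresentedGroup (V8nRels n)

/-- The generator `a` of `V_{8n}`. -/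
def aV (n : ℕ) : V8n n := PresentedGroup.of 0

/-- The generator `b` of `V_{8n}`. -/
def bV (n : ℕ) : V8n n := PresentedGroup.of 1
/-- The `F`-vector space of `F`-derivations of an `F`-algebra `A`,
realized as the `F`-linear endomorphisms of `A` satisfying the Leibniz rule. -/
def fDerivations (F : Type*) [CommSemiring F] (A : Type*) [Ring A] [Algebra F A] :
    Submodule F (A →ₗ[F] A) where
  carrier := {d | ∀ x y : A, d (x * y) = d x * y + x * d y}
  zero_mem' := by intro x y; simp
  add_mem' := by
    intro d e hd he x y
    simp only [LinearMap.add_apply, hd x y, he x y, add_mul, mul_add]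
    abel
  smul_mem' := by
    intro c d hd x y
    simp only [LinearMap.smul_apply, hd x y, smul_add, smul_mul_assoc, mul_smul_comm]

/-!
A derivation `d` of an algebra `A` is the same as a lift `x ↦ x + d x ε` of the identity to the
dual numbers `A[ε]`. A derivation of a group algebra is therefore determined by its values on
generators of the group, and these can be prescribed as soon as the lifted generators satisfy the
relations.

The group `V_{8n}` is generated by `b` and the involution `t = ab`, subject to the relations
`b⁴ = t² = 1`, `[b², t] = 1` and `(tb⁻¹)^{2n} = 1`. When `2` is invertible, every derivation kills
the central involution `b²`, so the first three relations say that `d b` anticommutes with `b` and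
that `d t` anticommutes with `t`. When moreover `n = 0` in the coefficient ring, the last relation
holds for every such choice of `d b` and `d t`.

The elements of the group algebra that anticommute with a group element `g` of central square are
the functions that are odd under conjugation by `g`, an involution whose fixed points form the
centralizer of `g`. They have dimension `(8n - |C(g)|) / 2`, and `|C(b)| = |C(t)|` is `4` for odd
`n` and `8` for even `n`, as seen on the model `(ℤ/2n × ℤ/2) ⋊ ℤ/2` of `V_{8n}`.
-/

/-! ### The group `V_{8n}` -/

namespace V8n

variable {n : ℕ}

variable (n) in
/-- The involution `t = ab` of `V_{8n}`. Together with `b` it generates `V_{8n}`, and conjugation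
by `t` maps `a` to `a⁻¹b²`. -/
def tV : V8n n := aV n * bV n

lemma aV_pow_two_mul : aV n ^ (2 * n) = 1 :=
  PresentedGroup.one_of_mem (by simp [V8nRels])

lemma bV_pow_four : bV n ^ 4 = 1 :=
  PresentedGroup.one_of_mem (by simp [V8nRels])

lemma bV_mul_aV_sq : (bV n * aV n) ^ 2 = 1 :=
  PresentedGroup.one_of_mem (rels := V8nRels n) (x := (.of 1 * .of 0) ^ 2) (by simp [V8nRels])

lemma bV_inv_mul_aV_sq : ((bV n)⁻¹ * aV n) ^ 2 = 1 :=
  PresentedGroup.one_of_mem (rels := V8nRels n) (x := ((.of 1)⁻¹ * .of 0) ^ 2)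
    (by simp [V8nRels])

lemma aV_mul_bV_mul_aV : aV n * bV n * aV n = (bV n)⁻¹ :=
  eq_inv_of_mul_eq_one_right <| by simpa only [sq, mul_assoc] using bV_mul_aV_sq (n := n)

lemma aV_mul_bV_inv_mul_aV : aV n * (bV n)⁻¹ * aV n = bV n := by
  rw [← inv_inv (bV n)]
  exact eq_inv_of_mul_eq_one_right <| by
    simpa only [sq, mul_assoc, inv_inv] using bV_inv_mul_aV_sq (n := n)

lemma bV_inv_sq : (bV n)⁻¹ ^ 2 = bV n ^ 2 := by
  rw [inv_pow, inv_eq_iff_mul_eq_one, ← pow_add, bV_pow_four]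

lemma commute_aV_bV_sq : Commute (aV n) (bV n ^ 2) :=
  calc aV n * bV n ^ 2
      = aV n * bV n * aV n * (aV n * (bV n)⁻¹ * aV n)⁻¹ * aV n := by simp [sq, mul_assoc]
    _ = (bV n)⁻¹ ^ 2 * aV n := by rw [aV_mul_bV_mul_aV, aV_mul_bV_inv_mul_aV, sq]
    _ = bV n ^ 2 * aV n := by rw [bV_inv_sq]

lemma commute_tV_bV_sq : Commute (tV n) (bV n ^ 2) :=
  commute_aV_bV_sq.mul_left (Commute.self_pow _ 2)

lemma tV_sq : tV n ^ 2 = 1 := by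
  rw [sq, tV, ← mul_assoc, aV_mul_bV_mul_aV, inv_mul_cancel]

lemma tV_mul_bV_inv : tV n * (bV n)⁻¹ = aV n :=
  mul_inv_cancel_right _ _

lemma semiconjBy_tV_aV : SemiconjBy (tV n) (aV n) ((aV n)⁻¹ * bV n ^ 2) :=
  calc tV n * aV n = (bV n)⁻¹ ^ 2 * bV n := by rw [tV, aV_mul_bV_mul_aV]; group
    _ = (aV n)⁻¹ * (aV n * bV n ^ 2) * bV n := by
      rw [bV_inv_sq, inv_mul_cancel_left]
    _ = (aV n)⁻¹ * bV n ^ 2 * tV n := by rw [commute_aV_bV_sq.eq, tV]; simp only [mul_assoc]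

lemma mem_of_bV_mem_of_tV_mem {S : Subgroup (V8n n)} (hb : bV n ∈ S) (ht : tV n ∈ S)
    (x : V8n n) : x ∈ S := by
  have ha : aV n ∈ S := tV_mul_bV_inv (n := n) ▸ mul_mem ht (inv_mem hb)
  have hle : Subgroup.closure (Set.range PresentedGroup.of) ≤ S := by
    rw [Subgroup.closure_le]
    rintro _ ⟨i, rfl⟩
    fin_cases i
    exacts [ha, hb]
  exact hle (PresentedGroup.closure_range_of _ ▸ Subgroup.mem_top x)

variable (n) in
lemma closure_bV_tV : Subgroup.closure {bV n, tV n} = ⊤ :=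
  eq_top_iff.mpr fun x _ ↦ mem_of_bV_mem_of_tV_mem (Subgroup.subset_closure (by simp))
    (Subgroup.subset_closure (by simp)) x

lemma bV_sq_mem_center : bV n ^ 2 ∈ Subgroup.center (V8n n) := by
  rw [Subgroup.mem_center_iff]
  intro x
  exact Subgroup.mem_centralizer_singleton_iff.mp <| mem_of_bV_mem_of_tV_mem
    (Subgroup.mem_centralizer_singleton_iff.mpr (Commute.self_pow _ 2))
    (Subgroup.mem_centralizer_singleton_iff.mpr commute_tV_bV_sq) x

lemma tV_mul_zpow_mul_zpow_mul_zpow (i k e : ℤ) :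
    tV n * (aV n ^ i * (bV n ^ 2) ^ k * tV n ^ e) =
      aV n ^ (-i) * (bV n ^ 2) ^ (i + k) * tV n ^ (e + 1) := by
  have ha : tV n * aV n ^ i = aV n ^ (-i) * (bV n ^ 2) ^ i * tV n := by
    rw [(semiconjBy_tV_aV.zpow_right i).eq, commute_aV_bV_sq.inv_left.mul_zpow, inv_zpow']
  calc _ = tV n * aV n ^ i * (bV n ^ 2) ^ k * tV n ^ e := by simp only [mul_assoc]
    _ = aV n ^ (-i) * (bV n ^ 2) ^ i * (tV n * (bV n ^ 2) ^ k) * tV n ^ e := by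
      rw [ha]; simp only [mul_assoc]
    _ = aV n ^ (-i) * (bV n ^ 2) ^ (i + k) * tV n ^ (e + 1) := by
      rw [(commute_tV_bV_sq.zpow_right k).eq, add_comm e, zpow_add, zpow_add, zpow_one]
      simp only [mul_assoc]

lemma bV_mul_zpow_mul_zpow_mul_zpow (i k e : ℤ) :
    bV n * (aV n ^ i * (bV n ^ 2) ^ k * tV n ^ e) =
      aV n ^ (-1 - i) * (bV n ^ 2) ^ (i + k) * tV n ^ (e + 1) := by
  have hb : bV n = (aV n)⁻¹ * tV n := (inv_mul_cancel_left _ _).symm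
  nth_rw 1 [hb]
  rw [mul_assoc, tV_mul_zpow_mul_zpow_mul_zpow]
  simp only [← mul_assoc, ← zpow_neg_one, ← zpow_add, sub_eq_add_neg]

lemma exists_eq_zpow_mul_zpow_mul_zpow (x : V8n n) :
    ∃ i k e : ℤ, x = aV n ^ i * (bV n ^ 2) ^ k * tV n ^ e := by
  induction closure_bV_tV n ▸ Subgroup.mem_top x using Subgroup.closure_induction_left with
  | one => exact ⟨0, 0, 0, by simp⟩
  | mul_left y hy z hz ih =>
    obtain ⟨i, k, e, rfl⟩ := ih
    rcases hy with rfl | rfl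
    · exact ⟨_, _, _, bV_mul_zpow_mul_zpow_mul_zpow i k e⟩
    · exact ⟨_, _, _, tV_mul_zpow_mul_zpow_mul_zpow i k e⟩
  | inv_mul_cancel y hy z hz ih =>
    obtain ⟨i, k, e, rfl⟩ := ih
    rcases hy with rfl | rfl
    · have hinv : (bV n)⁻¹ = bV n * (bV n * bV n) :=
        inv_eq_of_mul_eq_one_left (by simpa [pow_succ', mul_assoc] using bV_pow_four (n := n))
      exact ⟨_, _, _, by rw [hinv, mul_assoc, mul_assoc, bV_mul_zpow_mul_zpow_mul_zpow,
        bV_mul_zpow_mul_zpow_mul_zpow, bV_mul_zpow_mul_zpow_mul_zpow]⟩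
    · rw [inv_eq_of_mul_eq_one_left (sq (tV n) ▸ tV_sq)]
      exact ⟨_, _, _, tV_mul_zpow_mul_zpow_mul_zpow i k e⟩

lemma exists_lift {H : Type*} [Group H] {B T : H} (hB : B ^ 4 = 1) (hT : T ^ 2 = 1)
    (hcomm : Commute (B ^ 2) T) (hTB : (T * B⁻¹) ^ (2 * n) = 1) :
    ∃ f : V8n n →* H, f (bV n) = B ∧ f (tV n) = T := by
  have hconj : (B⁻¹ * (T * B⁻¹)) ^ 2 = 1 := by
    have hcomm' : Commute (B⁻¹ * T * B⁻¹⁻¹) (B⁻¹ ^ 2) := by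
      rw [inv_pow, Commute.inv_right_iff, inv_inv]
      exact ((Commute.self_pow B 2).inv_left.mul_left hcomm.symm).mul_left (Commute.self_pow B 2)
    calc (B⁻¹ * (T * B⁻¹)) ^ 2 = ((B⁻¹ * T * B⁻¹⁻¹) * B⁻¹ ^ 2) ^ 2 := by group
      _ = 1 := by rw [hcomm'.mul_pow, conj_pow, hT, ← pow_mul, inv_pow, hB]; group
  have hrel : ∀ r ∈ V8nRels n, FreeGroup.lift ![T * B⁻¹, B] r = 1 := by
    rintro r (rfl | rfl | rfl | rfl)
    · simpa using hTB
    · simpa using hB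
    · simp [← mul_assoc, conj_pow, hT]
    · simpa using hconj
  exact ⟨PresentedGroup.toGroup hrel, by simp [bV], by simp [tV, aV, bV]⟩

end V8n

/-! ### A model of `V_{8n}` and its centralizers -/

section SemidirectProduct

open SemidirectProduct

variable {N C : Type*} [CommGroup N] [Group C] {φ : C →* MulAut N}

lemma inl_mem_centralizer_singleton_iff {g : N ⋊[φ] C} {x : N} :
    inl x ∈ Subgroup.centralizer {g} ↔ x ∈ Function.fixedPoints (φ g.right) := by
  simp [Subgroup.mem_centralizer_singleton_iff, SemidirectProduct.ext_iff, mul_comm x,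
    Function.IsFixedPt, eq_comm]

lemma card_centralizer_singleton_of_zpowers_right_eq_top {g : N ⋊[φ] C}
    (hg : Subgroup.zpowers g.right = ⊤) :
    Nat.card (Subgroup.centralizer {g}) =
      (Function.fixedPoints (φ g.right)).ncard * Nat.card C := by
  let π : Subgroup.centralizer {g} →* C := rightHom.comp (Subgroup.subtype _)
  have hrange : π.range = ⊤ := by
    rw [eq_top_iff, ← hg, Subgroup.zpowers_le]
    exact ⟨⟨g, Subgroup.mem_centralizer_singleton_iff.mpr rfl⟩, rfl⟩
  let ι : Function.fixedPoints (φ g.right) → π.ker :=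
    fun x ↦ ⟨⟨inl x, inl_mem_centralizer_singleton_iff.mpr x.2⟩, rfl⟩
  have hι : Function.Bijective ι := by
    refine ⟨fun x y hxy ↦ ?_, ?_⟩
    · have hinl : (inl x.1 : N ⋊[φ] C) = inl y.1 :=
        congr_arg (fun z : π.ker ↦ (z : N ⋊[φ] C)) hxy
      exact Subtype.ext (inl_injective hinl)
    · rintro ⟨⟨y, hy⟩, hy'⟩
      obtain ⟨x, rfl⟩ : y ∈ (inl : N →* N ⋊[φ] C).range := by
        rwa [range_inl_eq_ker_rightHom]
      exact ⟨⟨x, inl_mem_centralizer_singleton_iff.mp hy⟩, rfl⟩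
  rw [← Subgroup.card_mul_index π.ker, Subgroup.index_ker, hrange, Subgroup.card_top,
    ← Nat.card_congr (.ofBijective ι hι), Nat.card_coe_set_eq]

end SemidirectProduct

namespace V8n

open SemidirectProduct

variable (n : ℕ)

/-- The automorphism `(i, k) ↦ (-i, k + i)` of `ℤ/2n × ℤ/2`, written multiplicatively. It models
conjugation by `t` on the subgroup generated by `a` and `b²`. -/
def twist : MulAut (Multiplicative (ZMod (2 * n) × ZMod 2)) :=
  AddEquiv.toMultiplicative
    { toFun p := (-p.1, p.2 + ZMod.castHom (dvd_mul_right 2 n) (ZMod 2) p.1)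
      invFun p := (-p.1, p.2 + ZMod.castHom (dvd_mul_right 2 n) (ZMod 2) p.1)
      left_inv p := by simp [add_assoc, CharTwo.add_self_eq_zero]
      right_inv p := by simp [add_assoc, CharTwo.add_self_eq_zero]
      map_add' p q := by ext <;> simp [add_comm, add_add_add_comm] }

lemma twist_apply (p : ZMod (2 * n) × ZMod 2) :
    twist n (.ofAdd p) =
      .ofAdd (-p.1, p.2 + ZMod.castHom (dvd_mul_right 2 n) (ZMod 2) p.1) :=
  rfl

lemma orderOf_twist : orderOf (twist n) = 2 := by
  refine orderOf_eq_prime (MulEquiv.ext fun p ↦ (twist n).left_inv p) fun h ↦ ?_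
  have := congr_arg (fun p ↦ p.toAdd.2) (DFunLike.congr_fun h (.ofAdd (1, 0)))
  simp [twist_apply] at this

/-- The semidirect product `(ℤ/2n × ℤ/2) ⋊ ℤ/2` serving as a concrete model of `V_{8n}`, where
`ℤ/2` is realized as the group generated by `twist n`. -/
abbrev Model : Type :=
  Multiplicative (ZMod (2 * n) × ZMod 2) ⋊[(Subgroup.zpowers (twist n)).subtype]
    Subgroup.zpowers (twist n)

lemma card_model : Nat.card (Model n) = 8 * n := by
  rw [SemidirectProduct.card, Nat.card_zpowers, orderOf_twist, Nat.card_congr Multiplicative.toAdd,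
    Nat.card_prod, Nat.card_zmod, Nat.card_zmod]
  ring

/-- The generator of the right factor of `Model n`. It is the right component of the images of both
`b` and `t`. -/
def twistGen : Subgroup.zpowers (twist n) :=
  ⟨twist n, Subgroup.mem_zpowers _⟩

lemma orderOf_twistGen : orderOf (twistGen n) = 2 :=
  (Subgroup.orderOf_mk _ _).trans (orderOf_twist n)

lemma twistGen_sq : twistGen n ^ 2 = 1 :=
  orderOf_dvd_iff_pow_eq_one.mp (orderOf_twistGen n).dvd

lemma zpowers_twistGen : Subgroup.zpowers (twistGen n) = ⊤ := by
  refine eq_top_iff.mpr ?_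
  rintro ⟨_, e, rfl⟩ -
  exact ⟨e, rfl⟩

lemma exists_hom_model :
    ∃ f : V8n n →* Model n, f (aV n) = inl (.ofAdd (1, 0)) ∧ f (bV n ^ 2) = inl (.ofAdd (0, 1)) ∧
      f (tV n) = inr (twistGen n) := by
  set A : Model n := inl (.ofAdd (1, 0))
  set Z : Model n := inl (.ofAdd (0, 1))
  set T : Model n := inr (twistGen n)
  have hT : T ^ 2 = 1 := by
    rw [← map_pow, twistGen_sq, map_one]
  have hA : A ^ (2 * n) = 1 := by
    have h : (2 * n) • ((1, 0) : ZMod (2 * n) × ZMod 2) = 0 := by ext <;> simp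
    rw [← map_pow, ← ofAdd_nsmul, h, ofAdd_zero, map_one]
  have hZ : Z ^ 2 = 1 := by
    have h : 2 • ((0, 1) : ZMod (2 * n) × ZMod 2) = 0 := by ext <;> simp [CharTwo.two_eq_zero]
    rw [← map_pow, ← ofAdd_nsmul, h, ofAdd_zero, map_one]
  have hB : (A⁻¹ * T) ^ 2 = Z := by
    rw [sq]
    refine SemidirectProduct.ext ?_ ?_
    · simp [A, T, Z, twistGen, twist_apply, ← ofAdd_neg, ← ofAdd_add, CharTwo.neg_eq]
    · simpa [A, T, Z, sq] using twistGen_sq n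
  have hZT : Commute Z T := by
    refine SemidirectProduct.ext ?_ ?_
    · simp [T, Z, twistGen, twist_apply]
    · simp [T, Z]
  obtain ⟨f, hfb, hft⟩ := exists_lift (n := n) (B := A⁻¹ * T) (T := T)
    (by rw [pow_mul _ 2 2, hB, hZ]) hT (hB ▸ hZT) (by simpa using hA)
  exact ⟨f, by rw [← tV_mul_bV_inv, map_mul, map_inv, hfb, hft]; simp, by rw [map_pow, hfb, hB],
    hft⟩

variable {n} in
lemma map_zpow_mul_zpow_mul_zpow {f : V8n n →* Model n} (ha : f (aV n) = inl (.ofAdd (1, 0)))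
    (hz : f (bV n ^ 2) = inl (.ofAdd (0, 1))) (ht : f (tV n) = inr (twistGen n)) (i k e : ℤ) :
    f (aV n ^ i * (bV n ^ 2) ^ k * tV n ^ e) =
      ⟨.ofAdd ((i : ZMod (2 * n)), (k : ZMod 2)), twistGen n ^ e⟩ := by
  have hai : f (aV n ^ i) = inl (.ofAdd ((i : ZMod (2 * n)), 0)) := by
    rw [map_zpow, ha, ← map_zpow, ← ofAdd_zsmul]
    simp
  have hzk : f ((bV n ^ 2) ^ k) = inl (.ofAdd (0, (k : ZMod 2))) := by
    rw [map_zpow, hz, ← map_zpow, ← ofAdd_zsmul]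
    simp
  rw [map_mul, map_mul, hai, hzk, map_zpow, ht, mk_eq_inl_mul_inr, ← map_mul, ← ofAdd_add,
    ← map_zpow]
  simp

lemma exists_mulEquiv_model :
    ∃ e : V8n n ≃* Model n, (e (bV n)).right = twistGen n ∧ (e (tV n)).right = twistGen n := by
  obtain ⟨f, ha, hz, ht⟩ := exists_hom_model n
  have hf := map_zpow_mul_zpow_mul_zpow ha hz ht
  have hinj : Function.Injective f := by
    rw [injective_iff_map_eq_one]
    intro x hx
    obtain ⟨i, k, e, rfl⟩ := exists_eq_zpow_mul_zpow_mul_zpow x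
    rw [hf, SemidirectProduct.ext_iff] at hx
    have hi : (i : ZMod (2 * n)) = 0 := congr_arg Prod.fst hx.1
    have hk : (k : ZMod 2) = 0 := congr_arg Prod.snd hx.1
    have he : twistGen n ^ e = 1 := hx.2
    rw [ZMod.intCast_zmod_eq_zero_iff_dvd] at hi hk
    rw [← orderOf_dvd_iff_zpow_eq_one, orderOf_twistGen] at he
    obtain ⟨⟨i, rfl⟩, ⟨k, rfl⟩, ⟨e, rfl⟩⟩ := And.intro hi (And.intro hk he)
    simp only [zpow_mul, zpow_natCast, ← pow_mul, Nat.reduceMul, aV_pow_two_mul, bV_pow_four,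
      tV_sq, one_zpow, mul_one]
  have hsurj : Function.Surjective f := by
    rintro ⟨⟨x, y⟩, ⟨_, e, rfl⟩⟩
    obtain ⟨i, rfl⟩ := ZMod.intCast_surjective x
    obtain ⟨k, rfl⟩ := ZMod.intCast_surjective y
    exact ⟨aV n ^ i * (bV n ^ 2) ^ k * tV n ^ e, hf i k e⟩
  have hb : bV n = (aV n)⁻¹ * tV n := (inv_mul_cancel_left _ _).symm
  have hfb : (f (bV n)).right = twistGen n := by simp [hb, ha, ht]
  exact ⟨.ofBijective f ⟨hinj, hsurj⟩, hfb, congr_arg right ht⟩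

lemma card_eq : Nat.card (V8n n) = 8 * n := by
  obtain ⟨e, -⟩ := exists_mulEquiv_model n
  rw [Nat.card_congr e.toEquiv, card_model]

lemma card_centralizer_singleton {x : V8n n} {e : V8n n ≃* Model n}
    (hx : (e x).right = twistGen n) :
    Nat.card (Subgroup.centralizer {x}) = 2 * (Function.fixedPoints (twist n)).ncard := by
  have hcard : Nat.card (Subgroup.centralizer {x}) = Nat.card (Subgroup.centralizer {e x}) :=
    Nat.card_congr <| e.toEquiv.subtypeEquiv fun y ↦ by
      simp [Subgroup.mem_centralizer_singleton_iff, ← map_mul]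
  rw [hcard, card_centralizer_singleton_of_zpowers_right_eq_top (hx ▸ zpowers_twistGen n), hx,
    Nat.card_zpowers, orderOf_twist, mul_comm]
  rfl

variable {n}

lemma neg_eq_self_iff_eq_zero_or_eq_natCast (hn : 0 < n) (x : ZMod (2 * n)) :
    -x = x ↔ x = 0 ∨ x = n := by
  have : NeZero (2 * n) := ⟨by lia⟩
  have hval : (n : ZMod (2 * n)).val = n := ZMod.val_natCast_of_lt (by lia)
  have hx : x = n ↔ x.val = n := by
    rw [← (ZMod.val_injective (2 * n)).eq_iff, hval]
  rw [ZMod.neg_eq_self_iff, Nat.mul_right_inj two_ne_zero, hx]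

lemma ncard_fixedPoints_twist (hn : 0 < n) :
    (Function.fixedPoints (twist n)).ncard = 2 * {x : ZMod (2 * n) |
      (x = 0 ∨ x = n) ∧ ZMod.castHom (dvd_mul_right 2 n) (ZMod 2) x = 0}.ncard := by
  have h : Function.fixedPoints (twist n) = Multiplicative.ofAdd '' ({x : ZMod (2 * n) |
      (x = 0 ∨ x = n) ∧ ZMod.castHom (dvd_mul_right 2 n) (ZMod 2) x = 0} ×ˢ Set.univ) := by
    ext p
    induction p with
    | ofAdd p =>
      simp [Function.IsFixedPt, twist_apply, Prod.ext_iff,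
        neg_eq_self_iff_eq_zero_or_eq_natCast hn]
  rw [h, Set.ncard_image_of_injective _ Multiplicative.ofAdd.injective, Set.ncard_prod,
    Set.ncard_univ, Nat.card_zmod, mul_comm]

lemma ncard_fixedPoints_twist_of_odd (hn : Odd n) :
    (Function.fixedPoints (twist n)).ncard = 2 := by
  have hcast : (n : ZMod 2) ≠ 0 := by
    rwa [Ne, ZMod.natCast_eq_zero_iff_even, Nat.not_even_iff_odd]
  have h : {x : ZMod (2 * n) | (x = 0 ∨ x = n) ∧
      ZMod.castHom (dvd_mul_right 2 n) (ZMod 2) x = 0} = {0} := by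
    ext x
    refine ⟨?_, fun hx ↦ ?_⟩
    · rintro ⟨rfl | rfl, hx⟩
      · rfl
      · exact absurd (by simpa using hx) hcast
    · simp [Set.mem_singleton_iff.mp hx]
  rw [ncard_fixedPoints_twist hn.pos, h, Set.ncard_singleton]

lemma ncard_fixedPoints_twist_of_even (hpos : 0 < n) (hn : Even n) :
    (Function.fixedPoints (twist n)).ncard = 4 := by
  have hne : (n : ZMod (2 * n)) ≠ 0 := by
    rw [Ne, ZMod.natCast_eq_zero_iff]
    exact Nat.not_dvd_of_pos_of_lt hpos (by lia)
  have h : {x : ZMod (2 * n) | (x = 0 ∨ x = n) ∧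
      ZMod.castHom (dvd_mul_right 2 n) (ZMod 2) x = 0} = {0, ↑n} := by
    ext x
    refine and_iff_left_of_imp ?_
    rintro (rfl | rfl)
    · exact map_zero _
    · rw [map_natCast, ZMod.natCast_eq_zero_iff_even]
      exact hn
  rw [ncard_fixedPoints_twist hpos, h, Set.ncard_pair hne.symm]

end V8n

open TrivSqZeroExt
open scoped DualNumber MonoidAlgebra

/-! ### Derivations as homomorphisms into the dual numbers -/

namespace fDerivations

variable {R A : Type*} [CommRing R] [Ring A] [Algebra R A]

lemma leibniz (d : fDerivations R A) (x y : A) : d.1 (x * y) = d.1 x * y + x * d.1 y :=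
  d.2 x y

lemma apply_one (d : fDerivations R A) : d.1 1 = 0 := by
  simpa using leibniz d 1 1

lemma apply_eq_zero_of_sq_eq_one (h2 : IsUnit (2 : R)) (d : fDerivations R A) {u : A}
    (hu : u ^ 2 = 1) (hcomm : Commute u (d.1 u)) : d.1 u = 0 := by
  have h : (2 : R) • (u * d.1 u) = 0 := by
    rw [two_smul, ← apply_one d, ← hu, sq, leibniz d, hcomm.eq]
  rw [h2.smul_eq_zero] at h
  calc d.1 u = u ^ 2 * d.1 u := by rw [hu, one_mul]
    _ = 0 := by rw [sq, mul_assoc, h, mul_zero]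

/-- The algebra homomorphism `x ↦ x + d x ε` into the dual numbers attached to a derivation `d`. -/
def toDualNumber (d : fDerivations R A) : A →ₐ[R] A[ε] :=
  AlgHom.ofLinearMap
    ((inlAlgHom R A A).toLinearMap + (inrHom A A).restrictScalars R ∘ₗ d.1)
    (by ext <;> simp [apply_one d])
    (fun x y ↦ by ext <;> simp [leibniz d, add_comm])

@[simp]
lemma fst_toDualNumber (d : fDerivations R A) (x : A) : (toDualNumber d x).fst = x := by
  simp [toDualNumber]

@[simp]
lemma snd_toDualNumber (d : fDerivations R A) (x : A) : (toDualNumber d x).snd = d.1 x := by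
  simp [toDualNumber]

/-- The derivation attached to an algebra homomorphism into the dual numbers that lifts the
identity. -/
def ofDualNumber (φ : A →ₐ[R] A[ε]) (hφ : ∀ x, (φ x).fst = x) : fDerivations R A :=
  ⟨(sndHom A A).restrictScalars R ∘ₗ φ.toLinearMap, fun x y ↦ by simp [hφ, add_comm]⟩

@[simp]
lemma ofDualNumber_apply (φ : A →ₐ[R] A[ε]) (hφ : ∀ x, (φ x).fst = x) (x : A) :
    (ofDualNumber φ hφ).1 x = (φ x).snd :=
  rfl

variable {G : Type*} [Group G]

lemma ext_of_closure_eq_top {s : Set G} (hs : Subgroup.closure s = ⊤)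
    {d d' : fDerivations R R[G]}
    (h : ∀ g ∈ s, d.1 (MonoidAlgebra.of R G g) = d'.1 (MonoidAlgebra.of R G g)) : d = d' := by
  have hlift : toDualNumber d = toDualNumber d' := by
    refine MonoidAlgebra.algHom_ext' ?_ (by ext)
    refine MonoidHom.eq_of_eqOn_dense hs fun g hg ↦ ?_
    exact TrivSqZeroExt.ext (by simp) (by simpa using h g hg)
  exact Subtype.ext <| LinearMap.ext fun x ↦ by
    rw [← snd_toDualNumber, hlift, snd_toDualNumber]

lemma exists_of_lift (c : G →* R[G][ε]) (hc : ∀ g, (c g).fst = MonoidAlgebra.of R G g) :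
    ∃ d : fDerivations R R[G], ∀ g, d.1 (MonoidAlgebra.of R G g) = (c g).snd := by
  have hcomp : (fstHom R R[G] R[G]).comp (MonoidAlgebra.lift R _ G c) = AlgHom.id R R[G] :=
    MonoidAlgebra.algHom_ext (fun g ↦ by simpa using hc g) (by ext)
  have hfst (x : R[G]) : (MonoidAlgebra.lift R R[G][ε] G c x).fst = x :=
    DFunLike.congr_fun hcomp x
  exact ⟨ofDualNumber _ hfst, fun g ↦ by rw [ofDualNumber_apply, MonoidAlgebra.lift_of]⟩

end fDerivations

/-! ### Anticommuting elements -/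

section Anticommutant

variable {R A : Type*} [CommRing R] [Ring A] [Algebra R A]

variable (R) in
/-- The submodule of all elements of an algebra that anticommute with `u`. -/
def anticommutant (u : A) : Submodule R A :=
  LinearMap.ker (LinearMap.mulLeft R u + LinearMap.mulRight R u)

lemma mem_anticommutant {u m : A} : m ∈ anticommutant R u ↔ u * m + m * u = 0 := by
  simp [anticommutant]

lemma mem_anticommutant_mul_of_commute {u v m : A} (hu : Commute u m)
    (hv : m ∈ anticommutant R v) : m ∈ anticommutant R (u * v) := by
  rw [mem_anticommutant] at hv ⊢
  rw [← mul_assoc m, ← hu.eq, mul_assoc, mul_assoc, ← mul_add, hv, mul_zero]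

lemma fDerivations.apply_mem_anticommutant (d : fDerivations R A) {u : A}
    (hu : d.1 (u ^ 2) = 0) : d.1 u ∈ anticommutant R u := by
  rwa [mem_anticommutant, add_comm, ← leibniz, ← sq]

lemma inl_add_inr_sq_eq_inl_sq {u m : A} (hm : m ∈ anticommutant R u) :
    (inl u + inr m : A[ε]) ^ 2 = inl (u ^ 2) := by
  rw [mem_anticommutant] at hm
  ext <;> simp [sq, hm]

end Anticommutant

section GroupAlgebra

variable {R G : Type*} [CommRing R] [Group G]

lemma mem_anticommutant_of_iff {g : G} {m : R[G]} :
    m ∈ anticommutant R (MonoidAlgebra.of R G g) ↔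
      ∀ x, m.coeff (MulAut.conj g x) = -m.coeff x := by
  rw [mem_anticommutant, MonoidAlgebra.ext_iff, DFunLike.ext_iff,
    ← (Equiv.mulLeft g).forall_congr_right]
  simp [MonoidAlgebra.coeff_single_mul_apply, MonoidAlgebra.coeff_mul_single_apply,
    eq_neg_iff_add_eq_zero, add_comm]

lemma coeff_eq_zero_of_mem_anticommutant_of (h2 : IsUnit (2 : R)) {g : G} {m : R[G]}
    (hm : m ∈ anticommutant R (MonoidAlgebra.of R G g)) : m.coeff g = 0 := by
  have h : m.coeff g = -m.coeff g := by simpa using mem_anticommutant_of_iff.mp hm g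
  rwa [eq_neg_iff_add_eq_zero, ← two_mul, h2.mul_right_eq_zero] at h

lemma coeff_snd_pow {x : R[G][ε]} {g y : G} (hx : x.fst = MonoidAlgebra.of R G g)
    (hy : Commute g y) (k : ℕ) :
    (x ^ k).snd.coeff (g ^ k * y) = k * x.snd.coeff (g * y) := by
  induction k with
  | zero => simp
  | succ k ih =>
    have hfst : (x ^ k).fst = MonoidAlgebra.single (g ^ k) 1 := by
      rw [fst_pow, hx, ← map_pow, MonoidAlgebra.of_apply]
    have hcomm : g ^ (k + 1) * y = g ^ k * y * g := by
      rw [pow_succ, mul_assoc, hy.eq, mul_assoc]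
    have hl : ((x ^ k).fst * x.snd).coeff (g ^ (k + 1) * y) = x.snd.coeff (g * y) := by
      simp [hfst, MonoidAlgebra.coeff_single_mul_apply, pow_succ, mul_assoc]
    have hr : ((x ^ k).snd * x.fst).coeff (g ^ (k + 1) * y) = k * x.snd.coeff (g * y) := by
      simp [hcomm, hx, MonoidAlgebra.coeff_mul_single_apply, ih]
    rw [pow_succ, DualNumber.snd_mul, MonoidAlgebra.coeff_add, Finsupp.add_apply, hl, hr]
    push_cast
    ring

end GroupAlgebra

/-! ### Counting anticommuting elements -/

section OddFunctions

open Function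

variable {R X : Type*} [CommRing R] {σ : X → X}

variable (R) in
/-- The module of `R`-valued functions that are odd under `σ`, meant for an involution `σ`. -/
def oddFunctions (σ : X → X) : Submodule R (X → R) where
  carrier := {f | ∀ x, f (σ x) = -f x}
  zero_mem' := by simp
  add_mem' hf hg x := by simp [hf x, hg x, add_comm]
  smul_mem' c f hf x := by simp [hf x]

lemma two_mul_ncard_lt_add_ncard_fixedPoints [Finite X] [LinearOrder X] (hσ : Involutive σ) :
    2 * {x | x < σ x}.ncard + (fixedPoints σ).ncard = Nat.card X := by
  have hgt : {x | σ x < x} = σ '' {x | x < σ x} := by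
    ext x
    simp [hσ.image_eq_preimage_symm, hσ x]
  have hcard : {x | σ x < x}.ncard = {x | x < σ x}.ncard := by
    rw [hgt, Set.ncard_image_of_injective _ hσ.injective]
  have hdisj : Disjoint {x | x < σ x} {x | σ x < x} :=
    Set.disjoint_left.mpr fun x hx ↦ lt_asymm hx
  have hcompl : ({x | x < σ x} ∪ {x | σ x < x})ᶜ = fixedPoints σ := by
    ext x
    simp [IsFixedPt, le_antisymm_iff]
  rw [two_mul, ← hcompl]
  nth_rw 2 [← hcard]
  rw [← Set.ncard_union_eq hdisj, Set.ncard_add_ncard_compl]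

lemma restrict_oddFunctions_bijective [LinearOrder X] (h2 : IsUnit (2 : R)) (hσ : Involutive σ) :
    Bijective (LinearMap.funLeft R R (Subtype.val : {x // x < σ x} → X) ∘ₗ
      (oddFunctions R σ).subtype) := by
  refine ⟨(injective_iff_map_eq_zero _).mpr fun f hf ↦ ?_, fun v ↦ ?_⟩
  · have hlt (x : X) (hx : x < σ x) : f.1 x = 0 := congr_fun hf ⟨x, hx⟩
    ext x
    rcases lt_trichotomy x (σ x) with hx | hx | hx
    · exact hlt x hx
    · have h : 2 * f.1 x = 0 := by
        rw [two_mul, ← eq_neg_iff_add_eq_zero, ← f.2 x, ← hx]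
      exact h2.mul_right_eq_zero.mp h
    · rw [← hσ x, f.2, hlt (σ x) (by rwa [hσ x])]
      simp
  · set w : X → R := extend Subtype.val v 0
    have hw (x : {x // x < σ x}) : w (σ x) = 0 :=
      extend_apply' _ _ _ fun ⟨y, hy⟩ ↦ by
        have := y.2
        rw [hy, hσ] at this
        exact this.asymm x.2
    refine ⟨⟨w - w ∘ σ, fun x ↦ by simp [hσ x]⟩, funext fun x ↦ ?_⟩
    simp [hw, w]

lemma exists_linearEquiv_oddFunctions [Finite X] (h2 : IsUnit (2 : R)) (hσ : Involutive σ) :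
    ∃ r : ℕ, 2 * r + (fixedPoints σ).ncard = Nat.card X ∧
      Nonempty (oddFunctions R σ ≃ₗ[R] (Fin r → R)) := by
  let : LinearOrder X := IsWellOrder.linearOrder WellOrderingRel
  exact ⟨_, two_mul_ncard_lt_add_ncard_fixedPoints hσ,
    ⟨.trans (.ofBijective _ (restrict_oddFunctions_bijective h2 hσ))
      (LinearEquiv.funCongrLeft R R (Finite.equivFin _).symm)⟩⟩

end OddFunctions

lemma exists_linearEquiv_anticommutant_of {R G : Type*} [CommRing R] [Group G] [Finite G]
    (h2 : IsUnit (2 : R)) {g : G} (hg : g ^ 2 ∈ Subgroup.center G) :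
    ∃ r : ℕ, 2 * r + Nat.card (Subgroup.centralizer {g}) = Nat.card G ∧
      Nonempty (anticommutant R (MonoidAlgebra.of R G g) ≃ₗ[R] (Fin r → R)) := by
  have hσ : Function.Involutive (MulAut.conj g) := fun x ↦ by
    rw [← MulAut.mul_apply, ← map_mul, ← sq, MulAut.conj_apply,
      (Subgroup.mem_center_iff.mp hg x).symm, mul_inv_cancel_right]
  obtain ⟨r, hr, ⟨e⟩⟩ := exists_linearEquiv_oddFunctions h2 hσ
  have hfix : Function.fixedPoints (MulAut.conj g) = Subgroup.centralizer {g} := by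
    ext x
    rw [Function.mem_fixedPoints, Function.IsFixedPt, MulAut.conj_apply, mul_inv_eq_iff_eq_mul,
      SetLike.mem_coe, Subgroup.mem_centralizer_singleton_iff, eq_comm]
  let coords : R[G] ≃ₗ[R] (G → R) :=
    (MonoidAlgebra.coeffLinearEquiv R).trans (Finsupp.linearEquivFunOnFinite R R G)
  have hcomap : anticommutant R (MonoidAlgebra.of R G g) =
      (oddFunctions R (MulAut.conj g)).comap coords.toLinearMap :=
    Submodule.ext fun m ↦ mem_anticommutant_of_iff
  exact ⟨r, by rw [← hr, hfix]; rfl,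
    ⟨(LinearEquiv.ofEq _ _ hcomap).trans (coords.ofSubmodule' _) |>.trans e⟩⟩

/-! ### Derivations of the group algebra of `V_{8n}` -/

section DualNumber

variable {R A : Type*} [CommRing R] [Ring A] [Algebra R A] {q x : A[ε]}

lemma commute_fst_snd_of_commute (hq : q.fst = 1) (h : Commute x q) : Commute x.fst q.snd := by
  have hsnd := congr_arg snd h.eq
  rwa [DualNumber.snd_mul, DualNumber.snd_mul, hq, mul_one, one_mul, add_comm,
    add_right_inj] at hsnd

lemma snd_mem_anticommutant_of_mul_mul_eq (hq : q.fst = 1) (h : q * x * q = x) :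
    q.snd ∈ anticommutant R x.fst := by
  have hsnd := congr_arg snd h
  rw [DualNumber.snd_mul, DualNumber.snd_mul, fst_mul, hq, mul_one, one_mul, one_mul,
    add_left_comm, add_eq_left] at hsnd
  exact mem_anticommutant.mpr hsnd

lemma commute_inl_of_forall_commute {z : A} (hz : ∀ y, Commute z y) (x : A[ε]) :
    Commute (inl z) x :=
  TrivSqZeroExt.ext (by simp [(hz x.fst).eq]) (by simp [(hz x.snd).eq])

end DualNumber

lemma commute_of_zpow {R G : Type*} [CommRing R] [Group G] {g : G} {m : R[G]}
    (h : Commute (MonoidAlgebra.of R G g) m) (k : ℤ) :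
    Commute (MonoidAlgebra.of R G (g ^ k)) m := by
  have hu : Commute (Units.map (MonoidAlgebra.of R G) (toUnits g) : R[G]) m := h
  have hpow := hu.units_zpow_left k
  rwa [← map_zpow, ← map_zpow] at hpow

lemma pow_two_mul_mul_mul_pow_two_mul {H : Type*} [Group H] {B T : H} (hB : B ^ 4 = 1)
    (hT : T ^ 2 = 1) (hcomm : Commute (B ^ 2) T) (k : ℕ) :
    (T * B⁻¹) ^ (2 * k) * T * (T * B⁻¹) ^ (2 * k) = T := by
  set X := T * B⁻¹
  have hBX : Commute (B⁻¹ ^ 2) X⁻¹ := by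
    rw [inv_pow, Commute.inv_inv_iff]
    exact hcomm.mul_right (Commute.pow_self B 2).inv_right
  have hTX : SemiconjBy T X (B⁻¹ ^ 2 * X⁻¹) :=
    calc T * X = T ^ 2 * B⁻¹ := by rw [sq, mul_assoc]
      _ = B⁻¹ ^ 2 * X⁻¹ * T := by simp [X, hT, sq]
  have hsq : SemiconjBy T (X ^ 2) (X ^ 2)⁻¹ := by
    have := hTX.pow_right 2
    rwa [hBX.mul_pow, ← pow_mul, inv_pow, hB, inv_one, one_mul, inv_pow] at this
  have hpow := (hsq.pow_right k).eq
  rw [inv_pow, ← pow_mul] at hpow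
  rw [mul_assoc, hpow, mul_inv_cancel_left]

namespace V8n

variable {R : Type*} [CommRing R] {n : ℕ}

lemma commute_of_bV_sq (m : R[V8n n]) : Commute (MonoidAlgebra.of R _ (bV n ^ 2)) m :=
  MonoidAlgebra.of_commute (fun g ↦ (Subgroup.mem_center_iff.mp bV_sq_mem_center g).symm) m

/- The coefficient at `y ∈ ⟨a, b²⟩` vanishes because `y` commutes with `a`, so that it is `2n` times
a coefficient of `X.snd`. At `y ∈ ⟨a, b²⟩t` it vanishes because `(X ^ (2 * n)).snd` anticommutes
with `y`. -/
lemma snd_pow_two_mul_eq_zero (h2 : IsUnit (2 : R)) (hn : (n : R) = 0) {X T : R[V8n n][ε]}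
    (hX : X.fst = MonoidAlgebra.of R _ (aV n)) (hT : T.fst = MonoidAlgebra.of R _ (tV n))
    (hXT : X ^ (2 * n) * T * X ^ (2 * n) = T) : (X ^ (2 * n)).snd = 0 := by
  have hfst : (X ^ (2 * n)).fst = 1 := by
    rw [fst_pow, hX, ← map_pow, aV_pow_two_mul, map_one]
  ext y
  obtain ⟨i, k, e, rfl⟩ := exists_eq_zpow_mul_zpow_mul_zpow y
  rcases Int.even_or_odd' e with ⟨e, rfl | rfl⟩
  · have hcomm : Commute (aV n) (aV n ^ i * (bV n ^ 2) ^ k) :=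
      (Commute.self_zpow _ i).mul_right (commute_aV_bV_sq.zpow_right k)
    have hcoeff := coeff_snd_pow hX hcomm (2 * n)
    rw [aV_pow_two_mul, one_mul, Nat.cast_mul, hn, mul_zero, zero_mul] at hcoeff
    rw [zpow_mul, zpow_ofNat, tV_sq, one_zpow, mul_one]
    exact hcoeff
  · rw [zpow_add_one, zpow_mul, zpow_ofNat, tV_sq, one_zpow, one_mul]
    refine coeff_eq_zero_of_mem_anticommutant_of h2 ?_
    have ha : Commute (MonoidAlgebra.of R _ (aV n)) (X ^ (2 * n)).snd :=
      hX ▸ commute_fst_snd_of_commute hfst (Commute.self_pow X _)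
    have hz : Commute (MonoidAlgebra.of R _ (bV n ^ 2)) (X ^ (2 * n)).snd :=
      commute_of_bV_sq _
    have ht : (X ^ (2 * n)).snd ∈ anticommutant R (MonoidAlgebra.of R _ (tV n)) :=
      hT ▸ snd_mem_anticommutant_of_mul_mul_eq hfst hXT
    rw [map_mul]
    refine mem_anticommutant_mul_of_commute ?_ ht
    rw [map_mul]
    exact (commute_of_zpow ha i).mul_left (commute_of_zpow hz k)

lemma exists_hom_units_dualNumber (h2 : IsUnit (2 : R)) (hn : (n : R) = 0) {B T : R[V8n n][ε]ˣ}
    (hBfst : B.val.fst = MonoidAlgebra.of R _ (bV n))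
    (hTfst : T.val.fst = MonoidAlgebra.of R _ (tV n))
    (hB : B ^ 4 = 1) (hT : T ^ 2 = 1) (hcomm : Commute (B ^ 2) T) :
    ∃ f : V8n n →* R[V8n n][ε]ˣ, f (bV n) = B ∧ f (tV n) = T := by
  have hXfst : (T * B⁻¹).val.fst = MonoidAlgebra.of R _ (aV n) := by
    refine ((Group.isUnit (bV n)).map (MonoidAlgebra.of R _)).mul_right_cancel ?_
    rw [← hBfst, ← fst_mul, ← Units.val_mul, inv_mul_cancel_right, hTfst, hBfst, tV, map_mul]
  refine exists_lift hB hT hcomm (Units.ext (TrivSqZeroExt.ext ?_ ?_))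
  · rw [Units.val_pow_eq_pow_val, fst_pow, hXfst, ← map_pow, aV_pow_two_mul, map_one,
      Units.val_one, fst_one]
  · exact snd_pow_two_mul_eq_zero h2 hn hXfst hTfst
      (congr_arg Units.val (pow_two_mul_mul_mul_pow_two_mul hB hT hcomm n))

lemma exists_apply_bV_eq_apply_tV_eq (h2 : IsUnit (2 : R)) (hn : (n : R) = 0)
    {β τ : R[V8n n]} (hβ : β ∈ anticommutant R (MonoidAlgebra.of R _ (bV n)))
    (hτ : τ ∈ anticommutant R (MonoidAlgebra.of R _ (tV n))) :
    ∃ d : fDerivations R R[V8n n],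
      d.1 (MonoidAlgebra.of R _ (bV n)) = β ∧ d.1 (MonoidAlgebra.of R _ (tV n)) = τ := by
  set B : R[V8n n][ε] := inl (MonoidAlgebra.of R _ (bV n)) + inr β
  set T : R[V8n n][ε] := inl (MonoidAlgebra.of R _ (tV n)) + inr τ
  have hBsq : B ^ 2 = inl (MonoidAlgebra.of R _ (bV n ^ 2)) := by
    rw [inl_add_inr_sq_eq_inl_sq hβ, map_pow]
  have hB : B ^ 4 = 1 := by
    rw [pow_mul B 2 2, hBsq, inl_pow, ← map_pow, ← pow_mul, bV_pow_four, map_one, inl_one]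
  have hT : T ^ 2 = 1 := by
    rw [inl_add_inr_sq_eq_inl_sq hτ, ← map_pow, tV_sq, map_one, inl_one]
  have hBfst : B.fst = MonoidAlgebra.of R _ (bV n) := by simp [B]
  have hTfst : T.fst = MonoidAlgebra.of R _ (tV n) := by simp [T]
  have hcomm : Commute (B ^ 2) T := by
    rw [hBsq]
    exact commute_inl_of_forall_commute commute_of_bV_sq T
  obtain ⟨f, hfb, hft⟩ := exists_hom_units_dualNumber h2 hn
    (B := .ofPowEqOne B 4 hB four_ne_zero) (T := .ofPowEqOne T 2 hT two_ne_zero) hBfst hTfst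
    (Units.pow_ofPowEqOne _ _) (Units.pow_ofPowEqOne _ _) (Commute.units_of_val hcomm)
  let c : V8n n →* R[V8n n][ε] := (Units.coeHom _).comp f
  have hcb : c (bV n) = B := congr_arg Units.val hfb
  have hct : c (tV n) = T := congr_arg Units.val hft
  have hc : (fstHom R R[V8n n] R[V8n n] : R[V8n n][ε] →* R[V8n n]).comp c =
      MonoidAlgebra.of R (V8n n) :=
    MonoidHom.eq_of_eqOn_dense (closure_bV_tV n) <| by
      rintro _ (rfl | rfl)
      exacts [(congr_arg fst hcb).trans hBfst, (congr_arg fst hct).trans hTfst]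
  obtain ⟨d, hd⟩ := fDerivations.exists_of_lift c (DFunLike.congr_fun hc)
  exact ⟨d, by rw [hd, hcb]; simp [B], by rw [hd, hct]; simp [T]⟩

lemma apply_bV_mem_anticommutant (h2 : IsUnit (2 : R)) (d : fDerivations R R[V8n n]) :
    d.1 (MonoidAlgebra.of R _ (bV n)) ∈ anticommutant R (MonoidAlgebra.of R _ (bV n)) := by
  refine fDerivations.apply_mem_anticommutant d ?_
  rw [← map_pow]
  refine fDerivations.apply_eq_zero_of_sq_eq_one h2 d ?_ (commute_of_bV_sq _)
  rw [← map_pow, ← pow_mul, bV_pow_four, map_one]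

lemma apply_tV_mem_anticommutant (d : fDerivations R R[V8n n]) :
    d.1 (MonoidAlgebra.of R _ (tV n)) ∈ anticommutant R (MonoidAlgebra.of R _ (tV n)) := by
  refine fDerivations.apply_mem_anticommutant d ?_
  rw [← map_pow, tV_sq, map_one, fDerivations.apply_one]

lemma nonempty_linearEquiv_prod_anticommutant (h2 : IsUnit (2 : R)) (hn : (n : R) = 0) :
    Nonempty (fDerivations R R[V8n n] ≃ₗ[R]
      anticommutant R (MonoidAlgebra.of R _ (bV n)) ×
        anticommutant R (MonoidAlgebra.of R _ (tV n))) := by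
  let eval (g : V8n n) : fDerivations R R[V8n n] →ₗ[R] R[V8n n] :=
    LinearMap.applyₗ (MonoidAlgebra.of R _ g) ∘ₗ Submodule.subtype _
  refine ⟨.ofBijective (((eval (bV n)).codRestrict _ (apply_bV_mem_anticommutant h2)).prod
    ((eval (tV n)).codRestrict _ apply_tV_mem_anticommutant)) ⟨fun d d' h ↦ ?_, ?_⟩⟩
  · refine fDerivations.ext_of_closure_eq_top (closure_bV_tV n) ?_
    rintro _ (rfl | rfl)
    exacts [congr_arg (fun p ↦ p.1.1) h, congr_arg (fun p ↦ p.2.1) h]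
  · rintro ⟨⟨β, hβ⟩, ⟨τ, hτ⟩⟩
    obtain ⟨d, rfl, rfl⟩ := exists_apply_bV_eq_apply_tV_eq h2 hn hβ hτ
    exact ⟨d, rfl⟩

lemma finrank_fDerivations_add_two_mul_ncard [Nontrivial R] (hpos : 0 < n) (h2 : IsUnit (2 : R))
    (hn : (n : R) = 0) :
    Module.finrank R (fDerivations R R[V8n n]) + 2 * (Function.fixedPoints (twist n)).ncard =
      8 * n := by
  have : Finite (V8n n) := Nat.finite_of_card_ne_zero (by rw [card_eq]; lia)
  obtain ⟨e, hb, ht⟩ := exists_mulEquiv_model n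
  have htsq : tV n ^ 2 ∈ Subgroup.center (V8n n) := tV_sq (n := n) ▸ one_mem _
  obtain ⟨r, hr, ⟨er⟩⟩ := exists_linearEquiv_anticommutant_of h2 (bV_sq_mem_center (n := n))
  obtain ⟨s, hs, ⟨es⟩⟩ := exists_linearEquiv_anticommutant_of h2 htsq
  rw [card_centralizer_singleton n hb, card_eq] at hr
  rw [card_centralizer_singleton n ht, card_eq] at hs
  obtain ⟨ev⟩ := nonempty_linearEquiv_prod_anticommutant h2 hn
  rw [(ev.trans (er.prodCongr es)).finrank_eq, Module.finrank_prod, Module.finrank_fin_fun,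
    Module.finrank_fin_fun]
  lia

end V8n

theorem dim_fDerivations_V8n_modular_general (n : ℕ) (hn : 0 < n) (R : Type*) [CommRing R]
    [Nontrivial R] (h2 : IsUnit (2 : R)) (hnR : (n : R) = 0) :
    (Odd n →
      Module.finrank R (fDerivations R (MonoidAlgebra R (V8n n))) = 4 * (2 * n - 1)) ∧
    (Even n →
      Module.finrank R (fDerivations R (MonoidAlgebra R (V8n n))) = 8 * (n - 1)) := by
  have h := V8n.finrank_fDerivations_add_two_mul_ncard hn h2 hnR
  refine ⟨fun hodd ↦ ?_, fun heven ↦ ?_⟩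
  · rw [V8n.ncard_fixedPoints_twist_of_odd hodd] at h
    lia
  · rw [V8n.ncard_fixedPoints_twist_of_even hn heven] at h
    lia

/-- If `char F = p` for an odd prime `p` with `gcd(n, p) ≠ 1`
(equivalently `p ∣ n`), then `Der_F(F V_{8n})` has dimension `4(2n-1)` over `F`
when `n` is odd, and dimension `8(n-1)` when `n` is even. -/
theorem dim_fDerivations_V8n_modular (n : ℕ) (hn : 0 < n) (F : Type*) [Field F]
    (p : ℕ) (hp : p.Prime) (hodd : Odd p) (hgcd : Nat.gcd n p ≠ 1) (hcharp : CharP F p) :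
    (Odd n →
      Module.finrank F (fDerivations F (MonoidAlgebra F (V8n n))) = 4 * (2 * n - 1)) ∧
    (Even n →
      Module.finrank F (fDerivations F (MonoidAlgebra F (V8n n))) = 8 * (n - 1)) :=
  dim_fDerivations_V8n_modular_general n hn F
    ((CharP.isUnit_ofNat_iff hp).mpr (hp.coprime_iff_not_dvd.mp hodd.coprime_two_right))
    ((CharP.cast_eq_zero_iff F p n).mpr (hp.dvd_iff_not_coprime.mpr (mt Nat.Coprime.symm hgcd)))
end

section
/- Let n be a positive integer and let F be a field that is an algebraic extension of a prime field, whose characteristic is 0 or an odd rational prime p with gcd(n,p) = 1. Then every derivation of the group algebra F V_{8n} is inner; that is, for every additive map d : F V_{8n} → F V_{8n} satisfying d(xy) = d(x)y + x d(y) for all x, y, there exists β ∈ F V_{8n} with d(α) = αβ − βα for all α ∈ F V_{8n}. -/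
/-!
Let `d` be a derivation of `F[G]`, where `G = V_{8n}`. Two ring homomorphisms out of a prime field
agree, and an algebraic extension of a (perfect) prime field is separable, so `F` is formally
unramified over `ℤ`: the restriction of `d` to the scalars is a derivation `F → F[G]`, hence zero,
and `d` is `F`-linear. The element `S = ∑ g, d(g) g⁻¹` then satisfies `S h - h S = |G| d(h)` for all
`h ∈ G`, so `β = -|G|⁻¹ S` works as soon as `|G|` is invertible in `F`. Finally `G = ⟨a⟩⟨b⟩`,
because `b²` is central and `b a b⁻¹ = a⁻¹ b²`; hence `|G|` divides `8n`, a unit in `F`.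
-/

section Derivations

variable {R A : Type*} [CommRing R] [Ring A] [Algebra R A]

variable (R) in
/-- The inner derivation `d_β : α ↦ αβ - βα` of an `R`-algebra, as an `R`-linear map. With this sign
convention it is the negative of `LieAlgebra.ad R A β`. -/
def innerDerivation (β : A) : A →ₗ[R] A :=
  LinearMap.mulRight R β - LinearMap.mulLeft R β

theorem innerDerivation_apply (β α : A) : innerDerivation R β α = α * β - β * α := rfl

variable [Algebra.FormallyUnramified ℤ R]

theorem map_algebraMap_eq_zero_of_leibniz (d : A →+ A)
    (hd : ∀ x y, d (x * y) = d x * y + x * d y) (r : R) : d (algebraMap R A r) = 0 := by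
  let δ : Derivation ℤ R A :=
    .mk' (d.comp (algebraMap R A : R →+ A)).toIntLinearMap fun x y ↦ by
      simp only [AddMonoidHom.coe_toIntLinearMap, AddMonoidHom.comp_apply, AddMonoidHom.coe_coe,
        map_mul, hd, Algebra.smul_def]
      rw [← Algebra.commutes y, add_comm]
  have hδ : δ = 0 :=
    (KaehlerDifferential.linearMapEquivDerivation ℤ R (M := A)).symm.injective
      (Subsingleton.elim _ _)
  exact congr($hδ r)

theorem map_smul_of_leibniz (d : A →+ A) (hd : ∀ x y, d (x * y) = d x * y + x * d y)
    (r : R) (x : A) : d (r • x) = r • d x := by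
  rw [Algebra.smul_def, hd, map_algebraMap_eq_zero_of_leibniz d hd, zero_mul, zero_add,
    Algebra.smul_def]

end Derivations

section Averaging

variable {G : Type*} [Group G] [Finite G]

theorem exists_eq_mul_sub_mul_of_isUnit_card {A : Type*} [Ring A]
    (hG : IsUnit (Nat.card G : A)) (s : G →* A) (c : G → A)
    (hc : ∀ g h, c (g * h) = c g * s h + s g * c h) :
    ∃ β, ∀ g, c g = s g * β - β * s g := by
  have := Fintype.ofFinite G
  let S := ∑ g, c g * s g⁻¹
  have S_mul_s (h : G) : S * s h = Nat.card G * c h + s h * S := by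
    have reindex : S = ∑ g, c (h * g) * s (h * g)⁻¹ :=
      (Equiv.sum_comp (Equiv.mulLeft h) fun g ↦ c g * s g⁻¹).symm
    have summand (g : G) : c (h * g) * s (h * g)⁻¹ * s h = c h + s h * (c g * s g⁻¹) := by
      have inv_mul : s (h * g)⁻¹ * s h = s g⁻¹ := by rw [← map_mul]; congr 1; group
      have mul_inv : s g * s g⁻¹ = 1 := by rw [← map_mul, mul_inv_cancel, map_one]
      rw [mul_assoc, inv_mul, hc, add_mul, mul_assoc, mul_inv, mul_one, mul_assoc]
    calc S * s h = ∑ g, c (h * g) * s (h * g)⁻¹ * s h := by rw [reindex, Finset.sum_mul]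
      _ = ∑ g, (c h + s h * (c g * s g⁻¹)) := Finset.sum_congr rfl fun g _ ↦ summand g
      _ = Nat.card G * c h + s h * S := by simp [S, Finset.sum_add_distrib, Finset.mul_sum]
  obtain ⟨N, hN⟩ := hG
  have N_inv_comm (x : A) : Commute (↑N⁻¹ : A) x :=
    Commute.units_inv_left (hN ▸ Nat.cast_commute _ x)
  refine ⟨-(↑N⁻¹ * S), fun g ↦ ?_⟩
  calc c g = ↑N⁻¹ * (S * s g - s g * S) := by
        rw [S_mul_s, add_sub_cancel_right, ← hN, Units.inv_mul_cancel_left]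
    _ = s g * -(↑N⁻¹ * S) - -(↑N⁻¹ * S) * s g := by
        rw [mul_neg, neg_mul, ← mul_assoc (s g), ← (N_inv_comm (s g)).eq]
        noncomm_ring

theorem exists_eq_innerDerivation_of_isUnit_card {R : Type*} [CommRing R]
    [Algebra.FormallyUnramified ℤ R] (hG : IsUnit (Nat.card G : R))
    (d : MonoidAlgebra R G →+ MonoidAlgebra R G)
    (hd : ∀ x y, d (x * y) = d x * y + x * d y) :
    ∃ β, ∀ α, d α = innerDerivation R β α := by
  have hG' : IsUnit (Nat.card G : MonoidAlgebra R G) := by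
    simpa using hG.map (algebraMap R (MonoidAlgebra R G))
  obtain ⟨β, hβ⟩ := exists_eq_mul_sub_mul_of_isUnit_card hG' (MonoidAlgebra.of R G)
    (fun g ↦ d (MonoidAlgebra.of R G g)) fun g h ↦ by rw [map_mul, hd]
  refine ⟨β, fun α ↦ ?_⟩
  induction α using MonoidAlgebra.induction_on with
  | of g => rw [innerDerivation_apply]; exact hβ g
  | add x y hx hy => rw [map_add, map_add, hx, hy]
  | smul r x hx => rw [map_smul_of_leibniz d hd, map_smul, hx]

end Averaging

section PrimeField

instance subsingleton_subfield_bot (F : Type*) [Field F] :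
    Subsingleton (Subfield (⊥ : Subfield F)) := by
  refine subsingleton_of_top_le_bot fun x _ ↦ ?_
  have le_map : (⊥ : Subfield F) ≤ (⊥ : Subfield (⊥ : Subfield F)).map (⊥ : Subfield F).subtype :=
    bot_le
  obtain ⟨y, hy, hyx⟩ := le_map x.2
  exact Subtype.ext hyx ▸ hy

variable (K : Type*) [Field K] [Subsingleton (Subfield K)]

theorem perfectField_of_subsingleton_subfield : PerfectField K := by
  obtain ⟨p, _⟩ := CharP.exists K
  rcases CharP.char_is_prime_or_zero K p with hp | rfl
  · have : Fact p.Prime := ⟨hp⟩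
    have frobenius_surjective : Function.Surjective (frobenius K p) :=
      RingHom.fieldRange_eq_top_iff.mp (Subsingleton.elim _ _)
    have := PerfectRing.ofSurjective K p frobenius_surjective
    exact PerfectRing.toPerfectField K p
  · have := CharP.charP_to_charZero K
    infer_instance

theorem formallyUnramified_int_of_subsingleton_subfield : Algebra.FormallyUnramified ℤ K :=
  Algebra.FormallyUnramified.iff_comp_injective.mpr fun B _ _ _ _ f g _ ↦
    have eqLocus_eq_top : (f : K →+* B).eqLocusField g = ⊤ := Subsingleton.elim _ _
    AlgHom.ext fun x ↦ eqLocus_eq_top.ge (Subfield.mem_top x)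

theorem formallyUnramified_int_of_isAlgebraic (F : Type*) [Field F] [Algebra K F]
    [Algebra.IsAlgebraic K F] : Algebra.FormallyUnramified ℤ F := by
  have := perfectField_of_subsingleton_subfield K
  have := formallyUnramified_int_of_subsingleton_subfield K
  have := Algebra.FormallyUnramified.of_isSeparable K F
  exact .comp ℤ K F

end PrimeField

section Group

open scoped Pointwise

variable {G : Type*} [Group G]

theorem card_dvd_card_mul_card_of_mul_eq_univ {H K : Subgroup G}
    (h : (H : Set G) * (K : Set G) = Set.univ) : Nat.card G ∣ Nat.card H * Nat.card K := by
  have orbit_eq_univ : MulAction.orbit H ((1 : G) : G ⧸ K) = Set.univ := by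
    refine Set.eq_univ_of_forall <| QuotientGroup.mk_surjective.forall.mpr fun g ↦ ?_
    obtain ⟨x, hx, k, hk, rfl⟩ : g ∈ (H : Set G) * (K : Set G) := h ▸ Set.mem_univ g
    exact ⟨⟨x, hx⟩, QuotientGroup.eq.mpr (by simpa using hk)⟩
  have index_dvd : K.index ∣ Nat.card H := by
    rw [Subgroup.index, ← Set.ncard_univ, ← orbit_eq_univ, ← MulAction.index_stabilizer]
    exact Subgroup.index_dvd_card _
  rw [← K.card_mul_index, mul_comm]
  exact mul_dvd_mul_right index_dvd _

variable {a b : G}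

theorem mul_eq_inv_mul_inv_of_sq_eq_one (h : (a * b) ^ 2 = 1) : a * b = b⁻¹ * a⁻¹ := by
  rw [← mul_inv_rev, eq_inv_iff_mul_eq_one, ← sq, h]

theorem commute_sq_of_mul_sq_eq_one (hb : b ^ 4 = 1) (hba : (b * a) ^ 2 = 1)
    (hb'a : (b⁻¹ * a) ^ 2 = 1) : Commute (b ^ 2) a := by
  have b_mul_a_inv : b * a⁻¹ = a * b⁻¹ := by
    rw [mul_inv_eq_iff_eq_mul, mul_assoc, mul_eq_inv_mul_inv_of_sq_eq_one hb'a, inv_inv,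
      mul_inv_cancel_left]
  have b_inv_sq : b⁻¹ ^ 2 = b ^ 2 := by
    rw [inv_pow, inv_eq_iff_mul_eq_one, ← pow_add, hb]
  calc b ^ 2 * a = b * a⁻¹ * b⁻¹ := by
        rw [sq, mul_assoc, mul_eq_inv_mul_inv_of_sq_eq_one hba, mul_assoc]
    _ = a * b⁻¹ ^ 2 := by rw [b_mul_a_inv, sq, mul_assoc]
    _ = a * b ^ 2 := by rw [b_inv_sq]

theorem semiconjBy_inv_mul_sq_of_mul_sq_eq_one (hb : b ^ 4 = 1) (hba : (b * a) ^ 2 = 1) :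
    SemiconjBy b a (a⁻¹ * b ^ 2) := by
  have b_cubed : b ^ 3 = b⁻¹ := by rw [eq_inv_iff_mul_eq_one, ← pow_succ, hb]
  calc b * a = a⁻¹ * b⁻¹ := mul_eq_inv_mul_inv_of_sq_eq_one hba
    _ = a⁻¹ * b ^ 2 * b := by rw [mul_assoc, ← pow_succ, b_cubed]

theorem mul_zpow_eq_of_mul_sq_eq_one (hb : b ^ 4 = 1) (hba : (b * a) ^ 2 = 1)
    (hb'a : (b⁻¹ * a) ^ 2 = 1) (i : ℤ) : b * a ^ i = a ^ (-i) * b ^ (2 * i + 1) := by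
  rw [((semiconjBy_inv_mul_sq_of_mul_sq_eq_one hb hba).zpow_right i).eq,
    (commute_sq_of_mul_sq_eq_one hb hba hb'a).symm.inv_left.mul_zpow, inv_zpow', ← zpow_natCast,
    ← zpow_mul, mul_assoc, ← zpow_add_one, Nat.cast_ofNat]

theorem mul_mem_zpowers_mul_zpowers (hb : b ^ 4 = 1) (hba : (b * a) ^ 2 = 1)
    (hb'a : (b⁻¹ * a) ^ 2 = 1) {g : G}
    (hg : g ∈ (Subgroup.zpowers a : Set G) * (Subgroup.zpowers b : Set G)) :
    b * g ∈ (Subgroup.zpowers a : Set G) * (Subgroup.zpowers b : Set G) := by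
  obtain ⟨_, ⟨i, rfl⟩, _, hy, rfl⟩ := hg
  refine ⟨a ^ (-i), ⟨-i, rfl⟩, _, mul_mem ⟨2 * i + 1, rfl⟩ hy, ?_⟩
  simp only [← mul_assoc, mul_zpow_eq_of_mul_sq_eq_one hb hba hb'a]

theorem zpowers_mul_zpowers_eq_univ (hb : b ^ 4 = 1) (hba : (b * a) ^ 2 = 1)
    (hb'a : (b⁻¹ * a) ^ 2 = 1) (hgen : Subgroup.closure {a, b} = ⊤) :
    (Subgroup.zpowers a : Set G) * (Subgroup.zpowers b : Set G) = Set.univ := by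
  refine Set.eq_univ_of_forall fun g ↦ ?_
  have hg : g ∈ Subgroup.closure {a, b} := hgen ▸ Subgroup.mem_top g
  have a_zpow_mul {y : G} (k : ℤ)
      (hy : y ∈ (Subgroup.zpowers a : Set G) * (Subgroup.zpowers b : Set G)) :
      a ^ k * y ∈ (Subgroup.zpowers a : Set G) * (Subgroup.zpowers b : Set G) := by
    obtain ⟨x, hx, z, hz, rfl⟩ := hy
    exact ⟨a ^ k * x, mul_mem ⟨k, rfl⟩ hx, z, hz, mul_assoc _ _ _⟩
  induction hg using Subgroup.closure_induction_left with
  | one => exact ⟨1, one_mem _, 1, one_mem _, one_mul 1⟩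
  | mul_left x hx y _ ih =>
    obtain rfl | rfl := hx
    · simpa using a_zpow_mul 1 ih
    · exact mul_mem_zpowers_mul_zpowers hb hba hb'a ih
  | inv_mul_cancel x hx y _ ih =>
    obtain rfl | rfl := hx
    · simpa using a_zpow_mul (-1) ih
    -- The relations are invariant under `b ↦ b⁻¹`.
    · have inv_pow_four : x⁻¹ ^ 4 = 1 := by rw [inv_pow, hb, inv_one]
      simpa using mul_mem_zpowers_mul_zpowers inv_pow_four hb'a (by rwa [inv_inv])
        (by simpa using ih)

end Group

section V8n

theorem aV_pow (n : ℕ) : aV n ^ (2 * n) = 1 :=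
  PresentedGroup.one_of_mem (rels := V8nRels n) (by simp [V8nRels])

theorem bV_pow_four (n : ℕ) : bV n ^ 4 = 1 :=
  PresentedGroup.one_of_mem (rels := V8nRels n) (by simp [V8nRels])

theorem bV_mul_aV_sq (n : ℕ) : (bV n * aV n) ^ 2 = 1 :=
  PresentedGroup.one_of_mem (rels := V8nRels n) (by simp [V8nRels])

theorem bV_inv_mul_aV_sq (n : ℕ) : ((bV n)⁻¹ * aV n) ^ 2 = 1 :=
  PresentedGroup.one_of_mem (rels := V8nRels n) (by simp [V8nRels])

theorem closure_aV_bV (n : ℕ) : Subgroup.closure {aV n, bV n} = ⊤ := by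
  rw [← PresentedGroup.closure_range_of]
  congr 1
  ext g
  simp [aV, bV, Fin.exists_fin_two, eq_comm]

theorem card_V8n_dvd (n : ℕ) : Nat.card (V8n n) ∣ 8 * n := by
  have univ_eq := zpowers_mul_zpowers_eq_univ (bV_pow_four n) (bV_mul_aV_sq n)
    (bV_inv_mul_aV_sq n) (closure_aV_bV n)
  calc Nat.card (V8n n)
      ∣ Nat.card (Subgroup.zpowers (aV n)) * Nat.card (Subgroup.zpowers (bV n)) :=
        card_dvd_card_mul_card_of_mul_eq_univ univ_eq
    _ = orderOf (aV n) * orderOf (bV n) := by rw [Nat.card_zpowers, Nat.card_zpowers]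
    _ ∣ 2 * n * 4 := mul_dvd_mul (orderOf_dvd_of_pow_eq_one (aV_pow n))
        (orderOf_dvd_of_pow_eq_one (bV_pow_four n))
    _ = 8 * n := by ring

theorem finite_V8n {n : ℕ} (hn : n ≠ 0) : Finite (V8n n) :=
  Nat.finite_of_card_ne_zero (ne_zero_of_dvd_ne_zero (by simpa using hn) (card_V8n_dvd n))

theorem derivation_V8n_isInner_general (n : ℕ) (hn : 0 < n) (R : Type*) [CommRing R]
    [Algebra.FormallyUnramified ℤ R] (h2n : IsUnit ((2 * n : ℕ) : R))
    (d : MonoidAlgebra R (V8n n) → MonoidAlgebra R (V8n n))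
    (hadd : ∀ x y, d (x + y) = d x + d y)
    (hleib : ∀ x y, d (x * y) = d x * y + x * d y) :
    ∃ β : MonoidAlgebra R (V8n n), ∀ α, d α = α * β - β * α := by
  have card_dvd_cube : Nat.card (V8n n) ∣ (2 * n) ^ 3 :=
    (card_V8n_dvd n).trans ⟨n ^ 2, by ring⟩
  have isUnit_card : IsUnit (Nat.card (V8n n) : R) :=
    isUnit_of_dvd_unit (Nat.cast_dvd_cast card_dvd_cube) (by simpa using h2n.pow 3)
  have : Finite (V8n n) := finite_V8n hn.ne'
  obtain ⟨β, hβ⟩ := exists_eq_innerDerivation_of_isUnit_card isUnit_card (.mk' d hadd) hleib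
  exact ⟨β, fun α ↦ (hβ α).trans (innerDerivation_apply β α)⟩

theorem isUnit_two_mul_natCast {n : ℕ} (hn : 0 < n) {F : Type*} [Field F]
    (hchar : CharZero F ∨ ∃ p : ℕ, p.Prime ∧ Odd p ∧ Nat.gcd n p = 1 ∧ CharP F p) :
    IsUnit ((2 * n : ℕ) : F) := by
  rw [isUnit_iff_ne_zero]
  rcases hchar with _ | ⟨p, hp, hodd, hgcd, _⟩
  · exact Nat.cast_ne_zero.mpr (by positivity)
  · rw [Ne, CharP.cast_eq_zero_iff F p, ← hp.coprime_iff_not_dvd]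
    exact (hodd.coprime_two_left.mul_left hgcd).symm

end V8n

/-- Let `F` be an algebraic extension of a prime field (i.e. every
element of `F` is algebraic over its prime subfield `⊥`) whose characteristic is `0`
or an odd prime `p` with `gcd(n, p) = 1`. Then every derivation of `F V_{8n}`
(additive map satisfying the Leibniz rule) is inner. -/
theorem derivation_V8n_isInner (n : ℕ) (hn : 0 < n) (F : Type*) [Field F]
    (halg : ∀ x : F, IsAlgebraic (⊥ : Subfield F) x)
    (hchar : CharZero F ∨ ∃ p : ℕ, p.Prime ∧ Odd p ∧ Nat.gcd n p = 1 ∧ CharP F p)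
    (d : MonoidAlgebra F (V8n n) → MonoidAlgebra F (V8n n))
    (hadd : ∀ x y, d (x + y) = d x + d y)
    (hleib : ∀ x y, d (x * y) = d x * y + x * d y) :
    ∃ β : MonoidAlgebra F (V8n n), ∀ α, d α = α * β - β * α := by
  have : Algebra.IsAlgebraic (⊥ : Subfield F) F := ⟨halg⟩
  have := formallyUnramified_int_of_isAlgebraic (⊥ : Subfield F) F
  exact derivation_V8n_isInner_general n hn F (isUnit_two_mul_natCast hn hchar) d hadd hleib
end
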